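/- arXiv:2506.18524 — 4 statements merged into one kernel-verified Lean document; each statement's English description precedes it below -/
import Mathlib

section
/- For all admissible Kerr-adS parameters (M, a, k) and all real r ≥ r₊, one has Δ(r) − k²(r − r₊)²(r + r₊)² ≥ 0. -/
/-!
Since `(r - r₊)² (r + r₊)² = (r² - r₊²)²`, the quartic terms of `Δ(r)` and `k² (r² - r₊²)²` cancel, and
`Δ(r) - k² (r² - r₊²)²` is the quadratic `A r² - 2 M r + C` with `A = 1 + a² k² + 2 k² r₊²`.
It vanishes at `r = r₊`, hence equals `(r - r₊) (A (r + r₊) - 2 M)`. It remains to see that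
`2 A r₊ ≥ 2 M`, that is `Δ'(r₊) ≥ 0`. A second root `0 ≤ q < r₊` gives, by dividing `Δ(r₊) - Δ(q) = 0`
by `r₊ - q`, the identity `2 M = k² (r₊ + q) (r₊² + q²) + (1 + a² k²) (r₊ + q)`; its right-hand side
increases in `q` and takes the value `2 A r₊` at `q = r₊`.
The same monotonicity shows that the larger of two distinct nonnegative roots is the largest root.
-/

open MeasureTheory Real Filter Topology

noncomputable section

namespace KerrAdS

/-- The polynomial Δ(r) = (r²+a²)(1+k²r²) − 2Mr. -/
def Delta (M a k r : ℝ) : ℝ := (r ^ 2 + a ^ 2) * (1 + k ^ 2 * r ^ 2) - 2 * M * r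

/-- Admissible (subextremal) Kerr-adS parameters. -/
def Admissible (M a k : ℝ) : Prop :=
  0 < M ∧ 0 < k ∧ 0 ≤ a ∧ a * k < 1 ∧
    ∃ r₁ r₂ : ℝ, 0 ≤ r₁ ∧ 0 ≤ r₂ ∧ r₁ ≠ r₂ ∧ Delta M a k r₁ = 0 ∧ Delta M a k r₂ = 0

/-- The black hole radius r₊: the largest root of Δ. -/
def rp (M a k : ℝ) : ℝ := sSup {r : ℝ | Delta M a k r = 0}

/-- Ξ = 1 − a²k². -/
def Xi (a k : ℝ) : ℝ := 1 - a ^ 2 * k ^ 2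

/-- ω₊ = a/(r₊² + a²). -/
def omp (M a k : ℝ) : ℝ := a / (rp M a k ^ 2 + a ^ 2)

/-- ∂ᵣΔ. -/
def dDelta (M a k : ℝ) : ℝ → ℝ := deriv (Delta M a k)

/-- ∂ᵣ²Δ. -/
def d2Delta (M a k : ℝ) : ℝ → ℝ := deriv (dDelta M a k)

/-- The radial potential V₀[λ]. -/
def V0 (M a k : ℝ) (m : ℤ) (lam r : ℝ) : ℝ :=
  Delta M a k r / (r ^ 2 + a ^ 2) ^ 2 * (lam - 2 - a ^ 2 * k ^ 2) -
    (Xi a k * omp M a k * m) ^ 2 * (r - rp M a k) ^ 2 * (r + rp M a k) ^ 2 /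
      (r ^ 2 + a ^ 2) ^ 2

/-- The radial potential V₀₀. -/
def V00 (M a k r : ℝ) : ℝ :=
  dDelta M a k r ^ 2 / (r ^ 2 + a ^ 2) ^ 2 +
    Delta M a k r / (r ^ 2 + a ^ 2) ^ 2 *
      (2 + a ^ 2 * k ^ 2 - 6 * k ^ 2 * r ^ 2 - d2Delta M a k r) +
    r * Delta M a k r * dDelta M a k r / (r ^ 2 + a ^ 2) ^ 3 -
    (2 * r ^ 2 - a ^ 2) * Delta M a k r ^ 2 / (r ^ 2 + a ^ 2) ^ 4

/-- The radial potential V₁. -/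
def V1 (M a k : ℝ) (m : ℤ) (r : ℝ) : ℝ :=
  dDelta M a k r / (r ^ 2 + a ^ 2) ^ 2 *
      (2 * (Xi a k * omp M a k * m) * (rp M a k ^ 2 - r ^ 2)) +
    Delta M a k r / (r ^ 2 + a ^ 2) ^ 2 * (8 * Xi a k * omp M a k * m * r)

/-- The complex radial potential V[λ] = V₀[λ] + V₀₀ − iV₁. -/
def V (M a k : ℝ) (m : ℤ) (lam r : ℝ) : ℂ :=
  Complex.ofReal (V0 M a k m lam r + V00 M a k r) -
    Complex.I * Complex.ofReal (V1 M a k m r)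

/-- The tortoise coordinate r★(r) = −∫_r^∞ (s²+a²)/Δ(s) ds. -/
def rstar (M a k r : ℝ) : ℝ := -∫ s in Set.Ioi r, (s ^ 2 + a ^ 2) / Delta M a k s

/-- The inverse of the tortoise coordinate on (r₊, ∞). -/
def rOf (M a k : ℝ) : ℝ → ℝ := Function.invFunOn (rstar M a k) (Set.Ioi (rp M a k))

/-- The potential V[λ] as a function of the tortoise variable. -/
def Vstar (M a k : ℝ) (m : ℤ) (lam x : ℝ) : ℂ := V M a k m lam (rOf M a k x)

/-- A (twice differentiable) solution of the radial Teukolsky equation R″ = V[λ]R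
on (−∞,0) in the tortoise variable. -/
def TeukSol (M a k : ℝ) (m : ℤ) (lam : ℝ) (R : ℝ → ℂ) : Prop :=
  (∀ x < (0 : ℝ), DifferentiableAt ℝ R x) ∧
  (∀ x < (0 : ℝ), DifferentiableAt ℝ (deriv R) x) ∧
  ∀ x < (0 : ℝ), deriv (deriv R) x = Vstar M a k m lam x * R x

/-- Regularity at the horizon: R = ΔF with F smooth up to r = r₊. -/
def RegularAtHorizon (M a k : ℝ) (R : ℝ → ℂ) : Prop :=
  ∃ F : ℝ → ℂ, ContDiffOn ℝ (⊤ : ℕ∞) F (Set.Ici (rp M a k)) ∧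
    ∀ r, rp M a k < r → R (rstar M a k r) = Complex.ofReal (Delta M a k r) * F r

/-- ℘[R] = 2Re(R conj(R′)). -/
def wp (R : ℝ → ℂ) (x : ℝ) : ℝ := 2 * (R x * starRingEnd ℂ (deriv R x)).re

/-- W[R] = R conj(R′) − R′ conj(R). -/
def Wr (R : ℝ → ℂ) (x : ℝ) : ℂ :=
  R x * starRingEnd ℂ (deriv R x) - deriv R x * starRingEnd ℂ (R x)

/-- Δ_θ = 1 − a²k²cos²θ. -/
def Deltheta (a k θ : ℝ) : ℝ := 1 - a ^ 2 * k ^ 2 * cos θ ^ 2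

/-- H(θ) = m(aω₊ sinθ − 1/sinθ). -/
def Hang (M a k : ℝ) (m : ℤ) (θ : ℝ) : ℝ :=
  m * (a * omp M a k * sin θ - 1 / sin θ)

/-- The angular potential G_m. -/
def Gm (M a k : ℝ) (m : ℤ) (θ : ℝ) : ℝ :=
  Xi a k ^ 2 * Hang M a k m θ ^ 2 / Deltheta a k θ + 2 * Deltheta a k θ +
    2 * a ^ 2 * k ^ 2 +
    4 * Xi a k ^ 2 * (cos θ / sin θ) ^ 2 / Deltheta a k θ -
    4 * Xi a k ^ 2 * Hang M a k m θ * (cos θ / sin θ) / Deltheta a k θ +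
    8 * a ^ 2 * k ^ 2 * Xi a k * m * cos θ / Deltheta a k θ +
    8 * Xi a k ^ 2 * a * m * omp M a k * cos θ

/-- The fundamental angular eigenvalue λ_m, defined through the Rayleigh quotient. -/
def angEV (M a k : ℝ) (m : ℤ) : ℝ :=
  sInf {E : ℝ | ∃ S : ℝ → ℝ, ContDiff ℝ (⊤ : ℕ∞) S ∧ tsupport S ⊆ Set.Ioo 0 π ∧
    (∫ θ in (0:ℝ)..π, S θ ^ 2 * sin θ) = 1 ∧
    E = ∫ θ in (0:ℝ)..π,
      (Deltheta a k θ * deriv S θ ^ 2 + Gm M a k m θ * S θ ^ 2) * sin θ}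

/-- λ̃_m = λ_m − 2 − a²k² − (Ξω₊m/k)². -/
def lamTilde (M a k : ℝ) (m : ℤ) : ℝ :=
  angEV M a k m - 2 - a ^ 2 * k ^ 2 - (Xi a k * omp M a k * m / k) ^ 2

/-- ω̃ = k(−λ̃_m)^{1/2}. -/
def omtilde (M a k : ℝ) (m : ℤ) : ℝ := k * Real.sqrt (-lamTilde M a k m)


/-- The secant slope of `Δ` between two distinct roots vanishes. -/
lemma two_mul_M_eq_of_roots {M a k p q : ℝ} (hpq : p ≠ q) (hp : Delta M a k p = 0)
    (hq : Delta M a k q = 0) :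
    2 * M = k ^ 2 * ((p + q) * (p ^ 2 + q ^ 2)) + (1 + a ^ 2 * k ^ 2) * (p + q) := by
  unfold Delta at hp hq
  refine mul_left_cancel₀ (sub_ne_zero.mpr hpq) ?_
  linear_combination hq - hp

/-- The larger of two distinct nonnegative roots of `Δ` is `r₊`. -/
lemma rp_eq_of_roots {M a k p q : ℝ} (hq0 : 0 ≤ q) (hqp : q < p)
    (hp : Delta M a k p = 0) (hq : Delta M a k q = 0) : rp M a k = p := by
  refine IsGreatest.csSup_eq ⟨hp, fun z hz => ?_⟩
  by_contra! hpz
  have h₁ := two_mul_M_eq_of_roots hqp.ne' hp hq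
  have h₂ := two_mul_M_eq_of_roots hpz.ne hp hz
  have hqz : q < z := hqp.trans hpz
  have hcub : (p + q) * (p ^ 2 + q ^ 2) ≤ (p + z) * (p ^ 2 + z ^ 2) := by
    have : 0 ≤ p + z := by linarith
    gcongr
  have h₃ := mul_le_mul_of_nonneg_left hcub (sq_nonneg k)
  have h₄ : (1 + a ^ 2 * k ^ 2) * (p + q) < (1 + a ^ 2 * k ^ 2) * (p + z) := by gcongr
  linarith

/-- Subextremality as a two-root statement with the largest root singled out. -/
lemma Admissible.exists_root_lt_rp {M a k : ℝ} (h : Admissible M a k) :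
    Delta M a k (rp M a k) = 0 ∧ ∃ q, 0 ≤ q ∧ q < rp M a k ∧ Delta M a k q = 0 := by
  obtain ⟨-, -, -, -, x, y, hx0, hy0, hxy, hx, hy⟩ := h
  rcases hxy.lt_or_gt with h | h
  · rw [rp_eq_of_roots hx0 h hy hx]
    exact ⟨hy, x, hx0, h, hx⟩
  · rw [rp_eq_of_roots hy0 h hx hy]
    exact ⟨hx, y, hy0, h, hy⟩

/-- For all admissible Kerr-adS parameters (M, a, k) and all real r ≥ r₊,
one has Δ(r) − k²(r − r₊)²(r + r₊)² ≥ 0. -/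
theorem stmt0 (M a k : ℝ) (hadm : Admissible M a k) (r : ℝ) (hr : rp M a k ≤ r) :
    Delta M a k r - k ^ 2 * (r - rp M a k) ^ 2 * (r + rp M a k) ^ 2 ≥ 0 := by
  obtain ⟨hp, q, hq0, hqp, hq⟩ := hadm.exists_root_lt_rp
  have hM := two_mul_M_eq_of_roots hqp.ne' hp hq
  generalize rp M a k = p at *
  have hcub : (p + q) * (p ^ 2 + q ^ 2) ≤ (p + p) * (p ^ 2 + p ^ 2) := by
    have : 0 ≤ p + p := by linarith
    gcongr
  have h₁ := mul_le_mul_of_nonneg_left hcub (sq_nonneg k)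
  have h₂ : (1 + a ^ 2 * k ^ 2) * (p + q) ≤ (1 + a ^ 2 * k ^ 2) * (p + p) := by gcongr
  have h₃ : (1 + a ^ 2 * k ^ 2 + 2 * k ^ 2 * p ^ 2) * (p + p) ≤
      (1 + a ^ 2 * k ^ 2 + 2 * k ^ 2 * p ^ 2) * (r + p) := by gcongr
  have hslope : 0 ≤ (1 + a ^ 2 * k ^ 2 + 2 * k ^ 2 * p ^ 2) * (r + p) - 2 * M := by linarith
  have hfac : Delta M a k r - k ^ 2 * (r - p) ^ 2 * (r + p) ^ 2 =
      (r - p) * ((1 + a ^ 2 * k ^ 2 + 2 * k ^ 2 * p ^ 2) * (r + p) - 2 * M) := by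
    unfold Delta at hp ⊢
    linear_combination hp
  rw [hfac]
  exact mul_nonneg (sub_nonneg.mpr hr) hslope

end KerrAdS
end
end

section
/- For all admissible Kerr-adS parameters (M, a, k) with a > 0, every integer m with |m| ≥ 2, and every r > r₊, one has 0 < V₁(r)/(Ξω₊m) < (8/r)(k²r₊² + 2). -/
/-!
Write `p = r₊`, `A = 1 + a²k²`. The quotient `V₁ / (Ξω₊m)` equals `N(r) / (r² + a²)²` where
`N(r) = (8k²p² + 4A)r³ - 12Mr² + (4Ap² + 8a²)r - 4Mp²` is a cubic. Since `Δ(p) = 0`, `N` vanishes at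
`p`, and `N(r) = (r - p) Q(r)` with `Q` quadratic. As a polynomial in `r - p`, `Q` has positive
leading coefficient, and its two other coefficients are positive multiples of `3k²p⁴ + Ap² - a²`,
i.e. of `p Δ'(p)`. The latter is positive because `Δ` has a second, smaller root
(`sq_eq_of_roots`, `rp_spec`); hence `N > 0` on `(p, ∞)`.

For the upper bound, `8(k²p² + 2)(r² + a²)² - r N(r)` has no term `k²p²r⁴`, and its `r⁴`
coefficient is `16 - 4A > 8` since `ak < 1`. The only negative term is `-(4Ap² + 8a²)r²`, which is
absorbed by `8r⁴` (as `p < r`) and by the term `32a²r²`.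
-/

open MeasureTheory Real Filter Topology

noncomputable section

namespace KerrAdS

/-- Eliminating `M` between `Δ(x) = 0` and `Δ(y) = 0` for distinct roots. -/
lemma sq_eq_of_roots {M a k x y : ℝ} (hxy : x ≠ y) (hx : Delta M a k x = 0)
    (hy : Delta M a k y = 0) :
    a ^ 2 = x * y * (k ^ 2 * (x ^ 2 + x * y + y ^ 2) + (1 + a ^ 2 * k ^ 2)) := by
  unfold Delta at hx hy
  have h : x - y ≠ 0 := sub_ne_zero.mpr hxy
  apply mul_left_cancel₀ h
  linear_combination x * hy - y * hx

/-- The larger nonnegative root `y` is `r₊`; the strict inequality says `r₊ Δ'(r₊) > 0`. -/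
lemma rp_spec {M a k x y : ℝ} (hk : 0 < k) (ha : 0 < a) (hx0 : 0 ≤ x) (hxy : x < y)
    (hx : Delta M a k x = 0) (hy : Delta M a k y = 0) :
    0 < rp M a k ∧ Delta M a k (rp M a k) = 0 ∧
      a ^ 2 < 3 * k ^ 2 * rp M a k ^ 4 + (1 + a ^ 2 * k ^ 2) * rp M a k ^ 2 := by
  have hy0 : 0 < y := hx0.trans_lt hxy
  have hlt : a ^ 2 < 3 * k ^ 2 * y ^ 4 + (1 + a ^ 2 * k ^ 2) * y ^ 2 := by
    calc a ^ 2 = x * y * (k ^ 2 * (x ^ 2 + x * y + y ^ 2) + (1 + a ^ 2 * k ^ 2)) :=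
          sq_eq_of_roots hxy.ne hx hy
      _ < y * y * (k ^ 2 * (y ^ 2 + y * y + y ^ 2) + (1 + a ^ 2 * k ^ 2)) := by gcongr
      _ = _ := by ring
  have hrp : rp M a k = y := by
    refine IsGreatest.csSup_eq ⟨hy, fun s hs => ?_⟩
    by_contra! hys
    -- A root beyond `y` would force the reverse inequality.
    have : a ^ 2 > 3 * k ^ 2 * y ^ 4 + (1 + a ^ 2 * k ^ 2) * y ^ 2 := by
      calc a ^ 2 = y * s * (k ^ 2 * (y ^ 2 + y * s + s ^ 2) + (1 + a ^ 2 * k ^ 2)) :=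
            sq_eq_of_roots hys.ne hy hs
        _ > y * y * (k ^ 2 * (y ^ 2 + y * y + y ^ 2) + (1 + a ^ 2 * k ^ 2)) := by gcongr
        _ = _ := by ring
    exact lt_asymm hlt this
  rw [hrp]
  exact ⟨hy0, hy, hlt⟩

lemma dDelta_eq (M a k r : ℝ) :
    dDelta M a k r = 4 * k ^ 2 * r ^ 3 + 2 * (1 + a ^ 2 * k ^ 2) * r - 2 * M := by
  have h2 : HasDerivAt (fun r : ℝ => r ^ 2) (2 * r) r := by simpa using hasDerivAt_pow 2 r
  have h := ((h2.add_const (a ^ 2)).mul ((h2.const_mul (k ^ 2)).const_add 1)).sub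
    ((hasDerivAt_id r).const_mul (2 * M))
  have h' : HasDerivAt (Delta M a k) _ r := h
  rw [dDelta, h'.deriv]
  ring

/-- The cubic numerator of `V₁ / (Ξω₊m)`, with `p` in place of `r₊`. -/
def cubicN (M a k p r : ℝ) : ℝ :=
  (8 * k ^ 2 * p ^ 2 + 4 * (1 + a ^ 2 * k ^ 2)) * r ^ 3 - 12 * M * r ^ 2 +
    (4 * (1 + a ^ 2 * k ^ 2) * p ^ 2 + 8 * a ^ 2) * r - 4 * M * p ^ 2

lemma V1_div_eq {M a k r : ℝ} {m : ℤ} (h : Xi a k * omp M a k * m ≠ 0) :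
    V1 M a k m r / (Xi a k * omp M a k * m) =
      cubicN M a k (rp M a k) r / (r ^ 2 + a ^ 2) ^ 2 := by
  rw [div_eq_iff h]
  unfold V1 cubicN
  rw [dDelta_eq, Delta]
  ring

lemma cubicN_pos {M a k p r : ℝ} (hp : 0 < p) (hpr : p < r) (hroot : Delta M a k p = 0)
    (hlt : a ^ 2 < 3 * k ^ 2 * p ^ 4 + (1 + a ^ 2 * k ^ 2) * p ^ 2) :
    0 < cubicN M a k p r := by
  unfold Delta at hroot
  have hd : 0 < r - p := sub_pos.mpr hpr
  have hg : 0 < 3 * k ^ 2 * p ^ 4 + (1 + a ^ 2 * k ^ 2) * p ^ 2 - a ^ 2 := sub_pos.mpr hlt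
  have key : p * cubicN M a k p r = (r - p) *
      (p * (8 * k ^ 2 * p ^ 2 + 4 * (1 + a ^ 2 * k ^ 2)) * (r - p) ^ 2 +
        6 * (3 * k ^ 2 * p ^ 4 + (1 + a ^ 2 * k ^ 2) * p ^ 2 - a ^ 2) * (r - p) +
        4 * p * (3 * k ^ 2 * p ^ 4 + (1 + a ^ 2 * k ^ 2) * p ^ 2 - a ^ 2)) := by
    unfold cubicN
    linear_combination (6 * r ^ 2 + 2 * p ^ 2) * hroot
  have : 0 < p * cubicN M a k p r := by
    rw [key]
    positivity
  exact pos_of_mul_pos_right this hp.le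

lemma cubicN_lt {M a k p r : ℝ} (hM : 0 < M) (ha : 0 < a) (hp : 0 < p) (hpr : p < r)
    (hak : a ^ 2 * k ^ 2 < 1) :
    cubicN M a k p r * r < 8 * (k ^ 2 * p ^ 2 + 2) * (r ^ 2 + a ^ 2) ^ 2 := by
  have hr : 0 < r := hp.trans hpr
  have h1 : 0 < 1 - a ^ 2 * k ^ 2 := sub_pos.mpr hak
  have h2 : 0 < r ^ 2 - p ^ 2 := by nlinarith
  have key : 8 * (k ^ 2 * p ^ 2 + 2) * (r ^ 2 + a ^ 2) ^ 2 - cubicN M a k p r * r =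
      4 * (1 - a ^ 2 * k ^ 2) * r ^ 4 + 8 * r ^ 2 * (r ^ 2 - p ^ 2) +
        4 * (1 - a ^ 2 * k ^ 2) * p ^ 2 * r ^ 2 + 24 * a ^ 2 * r ^ 2 + 16 * a ^ 4 +
        8 * k ^ 2 * p ^ 2 * (2 * a ^ 2 * r ^ 2 + a ^ 4) + 12 * M * r ^ 3 +
        4 * M * p ^ 2 * r := by
    unfold cubicN
    ring
  rw [← sub_pos, key]
  positivity

/-- For all admissible Kerr-adS parameters with a > 0, every integer m with
|m| ≥ 2, and every r > r₊, one has 0 < V₁(r)/(Ξω₊m) < (8/r)(k²r₊² + 2). -/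
theorem stmt1 (M a k : ℝ) (hadm : Admissible M a k) (ha : 0 < a)
    (m : ℤ) (hm : 2 ≤ |m|) (r : ℝ) (hr : rp M a k < r) :
    0 < V1 M a k m r / (Xi a k * omp M a k * m) ∧
    V1 M a k m r / (Xi a k * omp M a k * m) < 8 / r * (k ^ 2 * rp M a k ^ 2 + 2) := by
  obtain ⟨hM, hk, -, hak, x, y, hx0, hy0, hne, hx, hy⟩ := hadm
  obtain ⟨hp, hroot, hlt⟩ : 0 < rp M a k ∧ Delta M a k (rp M a k) = 0 ∧
      a ^ 2 < 3 * k ^ 2 * rp M a k ^ 4 + (1 + a ^ 2 * k ^ 2) * rp M a k ^ 2 := by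
    rcases lt_or_gt_of_ne hne with h | h
    · exact rp_spec hk ha hx0 h hx hy
    · exact rp_spec hk ha hy0 h hy hx
  have hr0 : 0 < r := hp.trans hr
  have hak2 : a ^ 2 * k ^ 2 < 1 := by
    rw [← mul_pow]
    exact pow_lt_one₀ (by positivity) hak two_ne_zero
  have hXi : Xi a k ≠ 0 := (sub_pos.mpr hak2).ne'
  have homp : omp M a k ≠ 0 := by unfold omp; positivity
  have hm0 : (m : ℝ) ≠ 0 := by
    rintro h
    rw [Int.cast_eq_zero] at h
    simp [h] at hm
  rw [V1_div_eq (mul_ne_zero (mul_ne_zero hXi homp) hm0)]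
  refine ⟨div_pos (cubicN_pos hp hr hroot hlt) (by positivity), ?_⟩
  rw [div_mul_eq_mul_div, div_lt_div_iff₀ (by positivity) hr0]
  exact cubicN_lt hM ha hp hr hak2

end KerrAdS
end
end

section
/- For every compact set K of admissible Kerr-adS parameters and every real δ with 0 < δ < min_{(M,a,k)∈K} (1 − aω₊)², there exists m₀ ∈ ℕ such that for all m ∈ ℤ with |m| ≥ m₀ and all (M, a, k) ∈ K, one has λ_m/m² ≥ Ξ²((1 − aω₊)² − δ). -/
/-!
The bound already holds pointwise for the potential. The terms of `Gm` containing `Hang` and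
`cot θ` complete a square:
`Gm = Ξ² (H - 2 cot θ)² / Δ_θ + 2 Δ_θ + 2 a²k² + 8 a²k² Ξ m cos θ / Δ_θ + 8 Ξ² a m ω₊ cos θ`.
Since `0 ≤ aω₊ ≤ 1`, one has `|H - 2 cot θ| ≥ |m| (1 - aω₊) - 2` on `(0, π)`, and `Ξ ≤ Δ_θ ≤ 1`, so
`Gm ≥ Ξ² m² (1 - aω₊)² - (12 Ξ² + 8) |m|` as soon as `|m| (1 - aω₊) ≥ 2` (`Gm_lower_bound`).
The linear error is absorbed by `Ξ² δ m²` once `|m|` is large; this is uniform on `K` because `Ξ` is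
bounded below by a positive constant there by compactness, and `1 - aω₊ > min δ 1`.

A pointwise lower bound for `Gm` passes to the Rayleigh quotient (`le_angEV`), because the
derivative term is nonnegative. As `sInf ∅ = 0`, this step also needs a normalised test function,
obtained from a bump centred at `π / 2` (`exists_testFun`).
-/

open MeasureTheory Real Filter Topology

noncomputable section

namespace KerrAdS

/-- There is a normalised test function, so the infimum defining `angEV` is over a nonempty set. -/
theorem exists_testFun : ∃ S : ℝ → ℝ, ContDiff ℝ (⊤ : ℕ∞) S ∧ tsupport S ⊆ Set.Ioo 0 π ∧
    (∫ θ in (0:ℝ)..π, S θ ^ 2 * sin θ) = 1 := by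
  let f : ContDiffBump (π / 2) := ⟨1 / 2, 1, by norm_num, by norm_num⟩
  have hf : ContDiff ℝ (⊤ : ℕ∞) f := f.contDiff
  set I := ∫ θ in (0:ℝ)..π, f θ ^ 2 * sin θ with hI
  have hpos : 0 < I := by
    apply intervalIntegral.integral_pos pi_pos
    · exact ((hf.continuous.pow 2).mul continuous_sin).continuousOn
    · intro x hx
      exact mul_nonneg (sq_nonneg _) (sin_nonneg_of_nonneg_of_le_pi hx.1.le hx.2)
    · refine ⟨π / 2, ⟨by positivity, by linarith [pi_pos]⟩, ?_⟩
      have h1 : f (π / 2) = 1 :=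
        f.one_of_mem_closedBall (Metric.mem_closedBall_self f.rIn_pos.le)
      rw [h1, sin_pi_div_two]
      norm_num
  refine ⟨fun θ => f θ * (√I)⁻¹, hf.mul contDiff_const, ?_, ?_⟩
  · refine (closure_mono (Function.support_mul_subset_left _ _)).trans ?_
    change tsupport f ⊆ _
    rw [f.tsupport_eq, Real.closedBall_eq_Icc]
    intro x hx
    have h3 := pi_gt_three
    change x ∈ Set.Icc (π / 2 - 1) (π / 2 + 1) at hx
    exact ⟨by linarith [hx.1], by linarith [hx.2]⟩
  · have h : ∀ θ, (f θ * (√I)⁻¹) ^ 2 * sin θ = I⁻¹ * (f θ ^ 2 * sin θ) := by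
      intro θ
      rw [mul_pow, inv_pow, sq_sqrt hpos.le]
      ring
    simp only [h]
    rw [intervalIntegral.integral_const_mul, ← hI]
    exact inv_mul_cancel₀ hpos.ne'

theorem Deltheta_bounds {a k : ℝ} (θ : ℝ) :
    Xi a k ≤ Deltheta a k θ ∧ Deltheta a k θ ≤ 1 := by
  unfold Xi Deltheta
  have h1 := cos_sq_le_one θ
  have h2 : 0 ≤ a ^ 2 * k ^ 2 := by positivity
  constructor <;> nlinarith [sq_nonneg (cos θ)]

theorem continuousOn_Gm {M a k : ℝ} (m : ℤ) (hX : 0 < Xi a k) :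
    ContinuousOn (Gm M a k m) (Set.Ioo 0 π) := by
  have hs : ∀ θ ∈ Set.Ioo 0 π, sin θ ≠ 0 := fun θ h => (sin_pos_of_mem_Ioo h).ne'
  have hD : ∀ θ ∈ Set.Ioo 0 π, Deltheta a k θ ≠ 0 :=
    fun θ _ => (hX.trans_le (Deltheta_bounds θ).1).ne'
  have hDc : ContinuousOn (Deltheta a k) (Set.Ioo 0 π) := by
    unfold Deltheta
    fun_prop
  have hHc : ContinuousOn (Hang M a k m) (Set.Ioo 0 π) := by
    unfold Hang
    fun_prop (disch := assumption)
  unfold Gm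
  fun_prop (disch := assumption)

/-- A test function vanishes near the poles, so it absorbs any singularity of `g` there. -/
theorem continuous_mul_testFun {g S : ℝ → ℝ} (hg : ContinuousOn g (Set.Ioo 0 π))
    (hS : Continuous S) (hsupp : tsupport S ⊆ Set.Ioo 0 π) :
    Continuous fun θ => g θ * S θ ^ 2 := by
  rw [continuous_iff_continuousAt]
  intro x
  by_cases hx : x ∈ tsupport S
  · have := hg.continuousAt (isOpen_Ioo.mem_nhds (hsupp hx))
    exact this.mul (hS.continuousAt.pow 2)
  · have h0 : S =ᶠ[𝓝 x] 0 := notMem_tsupport_iff_eventuallyEq.mp hx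
    have h1 : (fun θ => g θ * S θ ^ 2) =ᶠ[𝓝 x] fun _ => (0 : ℝ) := by
      filter_upwards [h0] with y hy
      simp [hy]
    exact continuousAt_const.congr h1.symm

/-- A pointwise lower bound for the potential bounds the fundamental angular eigenvalue. -/
theorem le_angEV {M a k : ℝ} (m : ℤ) (hX : 0 < Xi a k) {B : ℝ}
    (hB : ∀ θ ∈ Set.Ioo 0 π, B ≤ Gm M a k m θ) : B ≤ angEV M a k m := by
  unfold angEV
  apply le_csInf
  · obtain ⟨S, h1, h2, h3⟩ := exists_testFun
    exact ⟨_, S, h1, h2, h3, rfl⟩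
  rintro E ⟨S, hS, hsupp, hnorm, rfl⟩
  have hSc : Continuous S := hS.continuous
  have hS' : Continuous (deriv S) := hS.continuous_deriv (by simp)
  have hDc : Continuous (Deltheta a k) := by
    unfold Deltheta
    fun_prop
  have hGc := continuous_mul_testFun (continuousOn_Gm (M := M) m hX) hSc hsupp
  calc B = ∫ θ in (0:ℝ)..π, B * (S θ ^ 2 * sin θ) := by
        rw [intervalIntegral.integral_const_mul, hnorm, mul_one]
    _ ≤ _ := by
      apply intervalIntegral.integral_mono_on_of_le_Ioo pi_pos.le
      · exact Continuous.intervalIntegrable (by fun_prop) _ _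
      · exact Continuous.intervalIntegrable
          (((hDc.mul (hS'.pow 2)).add hGc).mul continuous_sin) _ _
      · intro θ hθ
        have hs := sin_pos_of_mem_Ioo hθ
        have hD : 0 ≤ Deltheta a k θ := hX.le.trans (Deltheta_bounds θ).1
        have h1 := mul_le_mul_of_nonneg_right (hB θ hθ) (sq_nonneg (S θ))
        have h2 := mul_nonneg hD (sq_nonneg (deriv S θ))
        rw [← mul_assoc]
        exact mul_le_mul_of_nonneg_right (by linarith) hs.le

/-- The estimate `|H - 2 cot θ| ≥ |m| (1 - b) - 2`, squared, with `b = aω₊`, `s = sin θ` and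
`c = cos θ`. -/
theorem square_lower_bound {m b s c : ℝ} (hb0 : 0 ≤ b) (hb1 : b ≤ 1) (hs : 0 < s)
    (hsc : s ^ 2 + c ^ 2 = 1) (hm : 2 ≤ |m| * (1 - b)) :
    (|m| * (1 - b) - 2) ^ 2 ≤ (m * (b * s - 1 / s) - 2 * (c / s)) ^ 2 := by
  have hc : |c| ≤ 1 := abs_le_one_iff_mul_self_le_one.mpr (by nlinarith [sq_nonneg s])
  have hs1 : s ^ 2 ≤ 1 := by nlinarith [sq_nonneg c]
  have hlow : |m| * (1 - b) - 2 ≤ |m * (1 - b * s ^ 2) + 2 * c| := by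
    have h1 : |m * (1 - b * s ^ 2)| = |m| * (1 - b * s ^ 2) := by
      rw [abs_mul, abs_of_nonneg (show 0 ≤ 1 - b * s ^ 2 by nlinarith)]
    have h2 := abs_sub_abs_le_abs_sub (m * (1 - b * s ^ 2)) (-(2 * c))
    rw [sub_neg_eq_add, abs_neg, abs_mul 2 c, abs_two, h1] at h2
    have h3 : |m| * (1 - b) ≤ |m| * (1 - b * s ^ 2) :=
      mul_le_mul_of_nonneg_left (by nlinarith) (abs_nonneg m)
    linarith
  have e : (m * (b * s - 1 / s) - 2 * (c / s)) ^ 2 = (m * (1 - b * s ^ 2) + 2 * c) ^ 2 / s ^ 2 := by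
    field_simp
    ring
  rw [e, le_div_iff₀ (by positivity)]
  have h4 : (|m| * (1 - b) - 2) ^ 2 ≤ (m * (1 - b * s ^ 2) + 2 * c) ^ 2 := by
    rw [← sq_abs (m * (1 - b * s ^ 2) + 2 * c)]
    exact pow_le_pow_left₀ (by linarith) hlow 2
  nlinarith [sq_nonneg (|m| * (1 - b) - 2)]

/-- `Gm` is bounded below by its leading term up to an error linear in `|m|`. -/
theorem Gm_lower_bound {M a k : ℝ} {m : ℤ} {θ : ℝ} (hX : 0 < Xi a k)
    (hb0 : 0 ≤ a * omp M a k) (hb1 : a * omp M a k ≤ 1)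
    (hm : 2 ≤ |(m : ℝ)| * (1 - a * omp M a k)) (hθ : θ ∈ Set.Ioo 0 π) :
    Xi a k ^ 2 * (m : ℝ) ^ 2 * (1 - a * omp M a k) ^ 2 - (12 * Xi a k ^ 2 + 8) * |(m : ℝ)|
      ≤ Gm M a k m θ := by
  have hs := sin_pos_of_mem_Ioo hθ
  obtain ⟨hD1, hD2⟩ := Deltheta_bounds (a := a) (k := k) θ
  have hD := hX.trans_le hD1
  have hP0 : 0 ≤ a ^ 2 * k ^ 2 := by positivity
  have hP1 : a ^ 2 * k ^ 2 ≤ 1 := by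
    unfold Xi at hX
    linarith
  have hsq := square_lower_bound hb0 hb1 hs (sin_sq_add_cos_sq θ) hm
  have hG : Gm M a k m θ =
      Xi a k ^ 2 * ((m : ℝ) * (a * omp M a k * sin θ - 1 / sin θ) - 2 * (cos θ / sin θ)) ^ 2
        / Deltheta a k θ + 2 * Deltheta a k θ + 2 * (a ^ 2 * k ^ 2) +
      8 * (a ^ 2 * k ^ 2) * (m * cos θ) * (Xi a k / Deltheta a k θ) +
      8 * Xi a k ^ 2 * (a * omp M a k) * (m * cos θ) := by
    unfold Gm Hang
    ring
  rw [hG]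
  set X := Xi a k
  set D := Deltheta a k θ
  set b := a * omp M a k
  set P := a ^ 2 * k ^ 2
  set n := |(m : ℝ)| with hn
  have hn0 : 0 ≤ n := abs_nonneg _
  have hmc : -n ≤ m * cos θ := by
    have h1 : |(m : ℝ) * cos θ| ≤ n := by
      rw [abs_mul]
      exact mul_le_of_le_one_right hn0 (abs_cos_le_one θ)
    exact (abs_le.mp h1).1
  have t1 : X ^ 2 * (n * (1 - b) - 2) ^ 2 ≤
      X ^ 2 * ((m : ℝ) * (b * sin θ - 1 / sin θ) - 2 * (cos θ / sin θ)) ^ 2 / D := by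
    rw [le_div_iff₀ hD]
    have h1 := mul_le_mul_of_nonneg_left hsq (sq_nonneg X)
    have h2 : 0 ≤ X ^ 2 * (n * (1 - b) - 2) ^ 2 := by positivity
    nlinarith
  have t2 : -(8 * n) ≤ 8 * P * (m * cos θ) * (X / D) := by
    have h1 : 0 ≤ X / D := by positivity
    have h2 : X / D ≤ 1 := (div_le_one hD).mpr hD1
    have h3 : 0 ≤ P * (X / D) := mul_nonneg hP0 h1
    have h4 : P * (X / D) ≤ 1 := mul_le_one₀ hP1 h1 h2
    nlinarith [mul_le_mul_of_nonneg_left hmc h3]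
  have t3 : -(8 * X ^ 2 * n) ≤ 8 * X ^ 2 * b * (m * cos θ) := by
    have h3 : 0 ≤ X ^ 2 * b := by positivity
    have h4 : X ^ 2 * b ≤ X ^ 2 := mul_le_of_le_one_right (sq_nonneg X) hb1
    nlinarith [mul_le_mul_of_nonneg_left hmc h3]
  have t4 : X ^ 2 * (m : ℝ) ^ 2 * (1 - b) ^ 2 - 4 * X ^ 2 * n ≤
      X ^ 2 * (n * (1 - b) - 2) ^ 2 := by
    have h1 : (m : ℝ) ^ 2 = n ^ 2 := (sq_abs _).symm
    rw [h1]
    have h2 : 0 ≤ X ^ 2 * n * b := by positivity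
    nlinarith [sq_nonneg X]
  linarith

/-- the uniform lower bound λ_m/m² ≥ Ξ²((1 − aω₊)² − δ) for |m| large. -/
theorem stmt7 (K : Set (ℝ × ℝ × ℝ)) (hK : IsCompact K)
    (hadm : ∀ M a k : ℝ, (M, a, k) ∈ K → Admissible M a k)
    (δ : ℝ) (hδ : 0 < δ)
    (hδlt : ∀ M a k : ℝ, (M, a, k) ∈ K → δ < (1 - a * omp M a k) ^ 2) :
    ∃ m₀ : ℕ, ∀ m : ℤ, (m₀ : ℤ) ≤ |m| → ∀ M a k : ℝ, (M, a, k) ∈ K →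
      angEV M a k m / (m : ℝ) ^ 2 ≥ Xi a k ^ 2 * ((1 - a * omp M a k) ^ 2 - δ) := by
  -- `Ξ` is bounded below by some `c > 0` on the compact set `K`.
  obtain ⟨c, hc0, hc⟩ : ∃ c : ℝ, 0 < c ∧ ∀ p ∈ K, c ≤ Xi p.2.1 p.2.2 := by
    refine hK.exists_forall_le' (f := fun p : ℝ × ℝ × ℝ => Xi p.2.1 p.2.2) ?_ ?_
    · unfold Xi
      fun_prop
    · rintro ⟨M, a, k⟩ hp
      obtain ⟨-, hk, ha, hak, -⟩ := hadm M a k hp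
      have : 0 ≤ a * k := by positivity
      change 0 < 1 - a ^ 2 * k ^ 2
      nlinarith
  -- The first summand makes `|m| (1 - aω₊) ≥ 2`; the second absorbs the linear error.
  obtain ⟨m₀, hm₀⟩ := exists_nat_ge (2 / min δ 1 + (12 + 8 / c ^ 2) / δ)
  refine ⟨m₀, fun m hm M a k hp => ?_⟩
  obtain ⟨-, hk, ha, hak, -⟩ := hadm M a k hp
  have hcX : c ≤ Xi a k := hc _ hp
  have hX : 0 < Xi a k := hc0.trans_le hcX
  have hb : a * omp M a k = a ^ 2 / (rp M a k ^ 2 + a ^ 2) := by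
    unfold omp
    ring
  have hb0 : 0 ≤ a * omp M a k := by
    rw [hb]
    positivity
  have hb1 : a * omp M a k ≤ 1 := by
    rw [hb]
    exact div_le_one_of_le₀ (by nlinarith [sq_nonneg (rp M a k)]) (by positivity)
  have hδb := hδlt M a k hp
  have hn : 2 / min δ 1 + (12 + 8 / c ^ 2) / δ ≤ |(m : ℝ)| := by
    refine hm₀.trans ?_
    exact_mod_cast hm
  have hmin : 0 < min δ 1 := lt_min hδ one_pos
  have hA : 0 < 2 / min δ 1 := by positivity
  have hB : 0 < (12 + 8 / c ^ 2) / δ := by positivity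
  have hnpos : 0 < |(m : ℝ)| := by linarith
  have hm2 : 0 < (m : ℝ) ^ 2 := by
    rw [← sq_abs]
    positivity
  have hm1 : 2 ≤ |(m : ℝ)| * (1 - a * omp M a k) := by
    have h1 : 2 ≤ |(m : ℝ)| * min δ 1 := (div_le_iff₀ hmin).mp (by linarith)
    -- `δ < (1 - aω₊)² ≤ 1 - aω₊` because `0 ≤ 1 - aω₊ ≤ 1`.
    have h2 : min δ 1 ≤ 1 - a * omp M a k := (min_le_left _ _).trans (by nlinarith)
    exact h1.trans (mul_le_mul_of_nonneg_left h2 hnpos.le)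
  rw [ge_iff_le, le_div_iff₀ hm2]
  apply le_angEV m hX
  intro θ hθ
  refine le_trans ?_ (Gm_lower_bound hX hb0 hb1 hm1 hθ)
  have h1 : 12 + 8 / c ^ 2 ≤ |(m : ℝ)| * δ := (div_le_iff₀ hδ).mp (by linarith)
  have h2 : 8 ≤ Xi a k ^ 2 * (8 / c ^ 2) := by
    rw [mul_div_assoc', le_div_iff₀ (by positivity)]
    nlinarith
  have h3 : 12 * Xi a k ^ 2 + 8 ≤ Xi a k ^ 2 * (|(m : ℝ)| * δ) := by
    nlinarith [mul_le_mul_of_nonneg_left h1 (sq_nonneg (Xi a k))]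
  have h4 := mul_le_mul_of_nonneg_right h3 hnpos.le
  have h5 : (m : ℝ) ^ 2 = |(m : ℝ)| * |(m : ℝ)| := by rw [← sq, sq_abs]
  rw [h5]
  nlinarith

end KerrAdS
end
end

section
/- For every compact set K of admissible Kerr-adS parameters there exist C > 0 and h₀ ∈ (0, π/4) such that for all (M, a, k) ∈ K, all m ∈ ℤ with |m| ≥ 2 and all h ∈ (0, h₀]: sup over θ ∈ (π/2 − h, π/2 + h) of (G_m(θ) − G_m(π/2)) is at most C·h·m². -/
/-!
The constant is uniform over all admissible parameters, because these enter `G_m` only through `b = a²k²`, `Ξ = 1 - b` and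
`x = aω₊ = a²/(r₊² + a²)`, all of which lie in `[0, 1]`, while `Δ_θ` and `sin² θ` are both at least
`1/2` once `cos² θ ≤ 1/2`.

Each term of `G_m(θ) - G_m(π/2)` is then at most a constant times `cos² θ · m²` or `|cos θ| · |m|`.
The delicate one is the first: writing `s = sin θ`, `c = cos θ`, one has
`(x s - 1/s)² - (x - 1)² = c²/s² - x² c²`, so that it varies quadratically in `c`.
Since `|cos θ| ≤ |π/2 - θ| ≤ h` and `1 ≤ |m| ≤ m²`, the claim follows, with `C = 62`. The algebraic
estimate is `Gm_algebraic_bound`.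
-/

open MeasureTheory Real Filter Topology

noncomputable section

namespace KerrAdS

/-- The parameter `x = aω₊` lies in `[0, 1]`; in the degenerate case `r₊ = a = 0` the convention
`0 / 0 = 0` is harmless. -/
lemma a_mul_omp_mem (M a k : ℝ) : 0 ≤ a * omp M a k ∧ a * omp M a k ≤ 1 := by
  have e : a * omp M a k = a ^ 2 / (rp M a k ^ 2 + a ^ 2) := by
    unfold omp; ring
  rw [e]
  exact ⟨by positivity, div_le_one_of_le₀ (by nlinarith [sq_nonneg (rp M a k)]) (by positivity)⟩

/-- The estimate of `G_m(θ) - G_m(π/2)` in algebraic form. Here `b = a²k²`, `X = Ξ`, `x = aω₊`,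
`(s, c) = (sin θ, cos θ)`, `t = 1 / sin θ` and `e = 1 / Δ_θ`. -/
lemma Gm_algebraic_bound {b X x s c t e m : ℝ} (hb0 : 0 ≤ b) (hb1 : b ≤ 1) (hX0 : 0 ≤ X)
    (hX1 : X ≤ 1) (hx0 : 0 ≤ x) (hx1 : x ≤ 1) (hs0 : 0 < s) (hsc : s ^ 2 + c ^ 2 = 1)
    (hc : c ^ 2 ≤ 1 / 2) (hst : t * s = 1) (he : e * (1 - b * c ^ 2) = 1) (hm : 1 ≤ |m|) :
    (X ^ 2 * (m * (x * s - t)) ^ 2 * e + 2 * (1 - b * c ^ 2) + 4 * X ^ 2 * (c * t) ^ 2 * e -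
        4 * X ^ 2 * (m * (x * s - t)) * (c * t) * e + 8 * b * X * m * c * e +
        8 * X ^ 2 * (x * m) * c) -
      (X ^ 2 * (m * (x - 1)) ^ 2 + 2) ≤ 62 * |c| * m ^ 2 := by
  have ht0 : 0 < t := by
    by_contra! h
    nlinarith
  have ht2 : t ^ 2 ≤ 2 := by
    have h1 : t ^ 2 * s ^ 2 = 1 := by rw [← mul_pow, hst, one_pow]
    nlinarith [sq_nonneg t]
  have hD : 1 / 2 ≤ 1 - b * c ^ 2 := by nlinarith [sq_nonneg c]
  have he0 : 0 < e := by
    by_contra! h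
    nlinarith
  have he2 : e ≤ 2 := by nlinarith
  have hX2 : X ^ 2 ≤ 1 := by nlinarith
  have hc1 : |c| ≤ 1 := by
    rw [← sq_le_one_iff_abs_le_one]; linarith
  have hcc : c ^ 2 ≤ |c| := by
    rw [← sq_abs]; nlinarith [abs_nonneg c]
  have hmm : |m| ≤ m ^ 2 := by
    rw [← sq_abs]; nlinarith
  have hm1 : 1 ≤ m ^ 2 := hm.trans hmm
  -- `0 ≤ 1 / s - x s ≤ 1 / s`
  have hst1 : s ≤ t := by nlinarith [sq_nonneg c]
  have hH : |x * s - t| ≤ t := by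
    rw [abs_le]
    constructor <;> nlinarith [mul_nonneg hx0 hs0.le]
  have key : (x * s - t) ^ 2 * e - (x - 1) ^ 2 ≤ 6 * c ^ 2 := by
    have h1 : (x * s - t) ^ 2 - (x - 1) ^ 2 = c ^ 2 * t ^ 2 - x ^ 2 * c ^ 2 := by
      linear_combination (x ^ 2 - t ^ 2) * hsc + (-2 * x + t * s + 1) * hst
    have h2 : (x * s - t) ^ 2 * e - (x - 1) ^ 2 =
        (c ^ 2 * t ^ 2 - x ^ 2 * c ^ 2) * e + (x - 1) ^ 2 * (b * c ^ 2 * e) := by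
      linear_combination e * h1 + (x - 1) ^ 2 * he
    have h3 : (c ^ 2 * t ^ 2 - x ^ 2 * c ^ 2) * e ≤ (c ^ 2 * 2) * 2 := by
      have h4 : c ^ 2 * t ^ 2 - x ^ 2 * c ^ 2 ≤ c ^ 2 * 2 := by
        nlinarith [sq_nonneg c, mul_nonneg (sq_nonneg x) (sq_nonneg c)]
      gcongr
    have h5 : (x - 1) ^ 2 * (b * c ^ 2 * e) ≤ 1 * (1 * c ^ 2 * 2) := by
      have h6 : (x - 1) ^ 2 ≤ 1 := by nlinarith
      gcongr
    linarith
  have T1 : X ^ 2 * (m * (x * s - t)) ^ 2 * e - X ^ 2 * (m * (x - 1)) ^ 2 ≤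
      1 * m ^ 2 * (6 * |c|) := by
    calc _ = X ^ 2 * m ^ 2 * ((x * s - t) ^ 2 * e - (x - 1) ^ 2) := by ring
      _ ≤ X ^ 2 * m ^ 2 * (6 * |c|) := by gcongr; linarith
      _ ≤ _ := by gcongr
  have T2 : 0 ≤ b * c ^ 2 := by positivity
  have T3 : 4 * X ^ 2 * (c * t) ^ 2 * e ≤ 16 * |c| * m ^ 2 := by
    calc _ = 4 * X ^ 2 * (c ^ 2 * t ^ 2) * e := by ring
      _ ≤ 4 * 1 * (|c| * 2) * 2 := by gcongr
      _ = 16 * |c| * 1 := by ring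
      _ ≤ _ := by gcongr
  have T4 : -(4 * X ^ 2 * (m * (x * s - t)) * (c * t) * e) ≤ 16 * |c| * m ^ 2 := by
    refine (neg_le_abs _).trans ?_
    simp only [abs_mul, abs_of_pos he0, abs_of_pos ht0, abs_of_nonneg (sq_nonneg X),
      abs_of_pos (four_pos : (0 : ℝ) < 4)]
    calc _ ≤ 4 * 1 * (m ^ 2 * t) * (|c| * t) * 2 := by gcongr
      _ = 8 * |c| * m ^ 2 * t ^ 2 := by ring
      _ ≤ 8 * |c| * m ^ 2 * 2 := by gcongr
      _ = _ := by ring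
  have T5 : 8 * b * X * m * c * e ≤ 16 * |c| * m ^ 2 := by
    refine (le_abs_self _).trans ?_
    simp only [abs_mul, abs_of_pos he0, abs_of_nonneg hb0, abs_of_nonneg hX0,
      abs_of_pos (by norm_num : (0 : ℝ) < 8)]
    calc _ ≤ 8 * 1 * 1 * m ^ 2 * |c| * 2 := by gcongr
      _ = _ := by ring
  have T6 : 8 * X ^ 2 * (x * m) * c ≤ 8 * |c| * m ^ 2 := by
    refine (le_abs_self _).trans ?_
    simp only [abs_mul, abs_of_nonneg hx0, abs_of_nonneg (sq_nonneg X),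
      abs_of_pos (by norm_num : (0 : ℝ) < 8)]
    calc _ ≤ 8 * 1 * (1 * m ^ 2) * |c| := by gcongr
      _ = _ := by ring
  linarith

/-- uniform bound sup_{θ ∈ (π/2−h, π/2+h)} (G_m(θ) − G_m(π/2)) ≤ Chm². -/
theorem stmt19 (K : Set (ℝ × ℝ × ℝ)) (hK : IsCompact K)
    (hadm : ∀ M a k : ℝ, (M, a, k) ∈ K → Admissible M a k) :
    ∃ C > (0 : ℝ), ∃ h₀ ∈ Set.Ioo (0 : ℝ) (π / 4),
      ∀ M a k : ℝ, (M, a, k) ∈ K → ∀ m : ℤ, 2 ≤ |m| →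
        ∀ h ∈ Set.Ioc (0 : ℝ) h₀, ∀ θ ∈ Set.Ioo (π / 2 - h) (π / 2 + h),
          Gm M a k m θ - Gm M a k m (π / 2) ≤ C * h * (m : ℝ) ^ 2 := by
  refine ⟨62, by norm_num, π / 8, ⟨by positivity, by linarith [pi_pos]⟩, ?_⟩
  intro M a k hmem m hm h ⟨hh0, hh1⟩ θ ⟨hθ1, hθ2⟩
  obtain ⟨-, hk, ha, hak, -⟩ := hadm M a k hmem
  obtain ⟨hx0, hx1⟩ := a_mul_omp_mem M a k
  have hak0 : 0 ≤ a * k := mul_nonneg ha hk.le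
  have hb0 : 0 ≤ a ^ 2 * k ^ 2 := by positivity
  have hb1 : a ^ 2 * k ^ 2 ≤ 1 := by
    rw [← mul_pow]; nlinarith
  have hch : |cos θ| ≤ h := by
    rw [← sin_pi_div_two_sub]
    refine abs_sin_le_abs.trans ?_
    rw [abs_le]; constructor <;> linarith
  have hc : cos θ ^ 2 ≤ 1 / 2 := by
    rw [← sq_abs]
    have h1 : |cos θ| ≤ 1 / 2 := by linarith [pi_lt_four]
    nlinarith [abs_nonneg (cos θ)]
  have hs0 : 0 < sin θ :=
    sin_pos_of_pos_of_lt_pi (by linarith [pi_pos]) (by linarith [pi_pos])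
  have hD : Deltheta a k θ ≠ 0 := by
    unfold Deltheta; nlinarith [sq_nonneg (cos θ)]
  have hm1 : (1 : ℝ) ≤ |(m : ℝ)| := by
    have : (2 : ℝ) ≤ |(m : ℝ)| := by exact_mod_cast hm
    linarith
  have main := Gm_algebraic_bound (t := 1 / sin θ) (e := 1 / Deltheta a k θ) (m := m) hb0 hb1
    (by unfold Xi; linarith : 0 ≤ Xi a k) (by unfold Xi; linarith) hx0 hx1 hs0
    (sin_sq_add_cos_sq θ) hc (one_div_mul_cancel hs0.ne') (one_div_mul_cancel hD) hm1
  have e1 : Gm M a k m (π / 2) =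
      Xi a k ^ 2 * (m * (a * omp M a k - 1)) ^ 2 + 2 + 2 * a ^ 2 * k ^ 2 := by
    simp [Gm, Hang, Deltheta]
  have e2 : 62 * |cos θ| * (m : ℝ) ^ 2 ≤ 62 * h * (m : ℝ) ^ 2 := by gcongr
  rw [e1]
  refine le_trans (le_of_eq ?_) (main.trans e2)
  have e3 : 1 - a ^ 2 * k ^ 2 * cos θ ^ 2 = Deltheta a k θ := rfl
  unfold Gm Hang
  rw [e3]
  ring

end KerrAdS
end
end
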